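/- Lemma (Conditional variance of the random sum). Let n ≥ 3, let a_1,…,a_n and b_1,…,b_n be real numbers, let ℓ ∈ {1,…,n}, and let s ∈ {1,…,n−1}. Let S be a uniformly random subset of {1,…,n} of size s, and set H_S = Σ_{i=1}^{n} ( a_i·1{i ∉ S} + b_i·1{i ∈ S} ). Then Var( H_S | ℓ ∉ S ) = ( n·s·(n−s−1) / ((n−1)(n−2)) ) · [ V̂(a−b) − (1/(n−1)) ( a_ℓ − b_ℓ − (ā − b̄) )² ], where ā = (1/n)Σ_i a_i, b̄ = (1/n)Σ_i b_i, and V̂(c) = (1/n) Σ_{i=1}^{n} (c_i − c̄)² denotes the empirical variance of a vector c ∈ ℝⁿ with mean c̄ = (1/n)Σ_i c_i. -/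

import Mathlib

/-!
Conditionally on `ℓ ∉ S`, the set `S` is a uniform `s`-subset of the `m = n - 1` remaining indices,
and `H_S = ∑ᵢ aᵢ - ∑_{i ∈ S} cᵢ` with `c = a - b`. So the claim is the variance formula for
sampling without replacement.

The first two moments of `∑_{i ∈ S} cᵢ` come from double counting: among the `C(m, s)` subsets, a
given index lies in a fraction `s / m` of them (`card_mul_card_filter_mem`), and a given pair of
distinct indices in a fraction `s (s - 1) / (m (m - 1))`
(`card_mul_card_filter_pair`). What remains is to rewrite the sums of `c` and `c²` over the indices
other than `ℓ` in terms of the empirical mean and variance of the full vector.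
-/

open scoped BigOperators

/-- Conditional expectation `E[g(S) | ℓ ∉ S]` when `S` is a uniformly random subset of
`{1,…,n}` of size exactly `s`: the average of `g` over the size-`s` subsets avoiding `ℓ`. -/
noncomputable def unifSubsetCondExp (n s : ℕ) (g : Finset (Fin n) → ℝ) (ℓ : Fin n) : ℝ :=
  (∑ S ∈ ((Finset.univ : Finset (Fin n)).powersetCard s).filter (fun S => ℓ ∉ S), g S) /
    ((((Finset.univ : Finset (Fin n)).powersetCard s).filter (fun S => ℓ ∉ S)).card : ℝ)

/-- Conditional variance `Var(g(S) | ℓ ∉ S) = E[g(S)² | ℓ ∉ S] − (E[g(S) | ℓ ∉ S])²`. -/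
noncomputable def unifSubsetCondVar (n s : ℕ) (g : Finset (Fin n) → ℝ) (ℓ : Fin n) : ℝ :=
  unifSubsetCondExp n s (fun S => g S ^ 2) ℓ - (unifSubsetCondExp n s g ℓ) ^ 2

/-- The random sum `H_S = ∑ᵢ (aᵢ·1{i∉S} + bᵢ·1{i∈S})`. -/
def randomSum {n : ℕ} (a b : Fin n → ℝ) (S : Finset (Fin n)) : ℝ :=
  ∑ i : Fin n, (if i ∉ S then a i else b i)

/-- Empirical mean of a vector `c ∈ ℝⁿ`. -/
noncomputable def empMean {n : ℕ} (c : Fin n → ℝ) : ℝ := (∑ i, c i) / n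

/-- Empirical variance `V̂(c) = (1/n) ∑ᵢ (cᵢ − c̄)²` of a vector `c ∈ ℝⁿ`. -/
noncomputable def empVar {n : ℕ} (c : Fin n → ℝ) : ℝ :=
  (∑ i, (c i - empMean c) ^ 2) / n

open Finset

theorem card_mul_card_filter_mem {α : Type*} [DecidableEq α] (T : Finset α) (s : ℕ) {i : α}
    (hi : i ∈ T) :
    (#T : ℝ) * #{S ∈ T.powersetCard s | i ∈ S} = s * (#T).choose s := by
  rcases s with _ | s
  · simp
  · have h := card_filter_powersetCard_subset {i} T (s + 1) (by simpa using hi) (by simp)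
    simp only [singleton_subset_iff, card_singleton, Nat.add_sub_cancel] at h
    rw [h]
    obtain ⟨m, hm⟩ : ∃ m, #T = m + 1 :=
      Nat.exists_eq_succ_of_ne_zero (card_pos.2 ⟨i, hi⟩).ne'
    rw [hm, Nat.add_sub_cancel]
    have := Nat.add_one_mul_choose_eq m s
    rw [mul_comm ((s + 1 : ℕ) : ℝ)]
    exact_mod_cast this

theorem card_mul_card_filter_pair {α : Type*} [DecidableEq α] (T : Finset α) (s : ℕ) {i j : α}
    (hi : i ∈ T) (hj : j ∈ T) (hij : i ≠ j) :
    (#T : ℝ) * (#T - 1) * #{S ∈ T.powersetCard s | i ∈ S ∧ j ∈ S}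
      = s * (s - 1) * (#T).choose s := by
  have hsub : ({i, j} : Finset α) ⊆ T := by
    simp [insert_subset_iff, hi, hj]
  -- For `s < 2` no subset contains both points; otherwise the count is `C(m - 2, s - 2)`.
  by_cases hs : s < 2
  · have h0 : #{S ∈ T.powersetCard s | i ∈ S ∧ j ∈ S} = 0 := by
      rw [card_eq_zero, filter_eq_empty_iff]
      rintro S hS ⟨h1, h2⟩
      have h3 : ({i, j} : Finset α) ⊆ S := by simp [insert_subset_iff, h1, h2]
      have h4 := card_le_card h3
      rw [card_pair hij, (mem_powersetCard.1 hS).2] at h4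
      omega
    rw [h0]
    interval_cases s <;> simp
  · obtain ⟨r, rfl⟩ : ∃ r, s = r + 2 := ⟨s - 2, by omega⟩
    have h := card_filter_powersetCard_subset {i, j} T (r + 2) hsub (by simp [card_pair hij])
    simp only [insert_subset_iff, singleton_subset_iff, card_pair hij, Nat.add_sub_cancel] at h
    rw [h]
    have h2 := card_le_card hsub
    rw [card_pair hij] at h2
    obtain ⟨m, hm⟩ : ∃ m, #T = m + 2 := ⟨#T - 2, by omega⟩
    rw [hm, Nat.add_sub_cancel]
    have e1 : ((m : ℝ) + 1) * m.choose r = (m + 1).choose (r + 1) * (r + 1) := by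
      exact_mod_cast Nat.add_one_mul_choose_eq m r
    have e2 : ((m : ℝ) + 2) * (m + 1).choose (r + 1) = (m + 2).choose (r + 2) * (r + 2) := by
      exact_mod_cast Nat.add_one_mul_choose_eq (m + 1) (r + 1)
    push_cast
    linear_combination ((m : ℝ) + 2) * e1 + (r + 1 : ℝ) * e2

/-- First moment of a sum sampled without replacement, cleared of denominators. -/
theorem sum_powersetCard_sum {α : Type*} [DecidableEq α] (T : Finset α) (s : ℕ) (c : α → ℝ) :
    (#T : ℝ) * ∑ S ∈ T.powersetCard s, ∑ i ∈ S, c i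
      = s * (#T).choose s * ∑ i ∈ T, c i := by
  have h : ∑ S ∈ T.powersetCard s, ∑ i ∈ S, c i
      = ∑ i ∈ T, #{S ∈ T.powersetCard s | i ∈ S} * c i := by
    rw [sum_comm' (s' := fun i => {S ∈ T.powersetCard s | i ∈ S}) (t' := T)]
    · simp
    · intro S i
      simp only [mem_powersetCard, mem_filter]
      exact ⟨fun h => ⟨⟨h.1, h.2⟩, h.1.1 h.2⟩, fun h => h.1⟩
  rw [h, mul_sum, mul_sum]
  refine sum_congr rfl fun i hi => ?_
  rw [← mul_assoc, card_mul_card_filter_mem T s hi]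

/-- Second moment of a sum sampled without replacement, cleared of denominators. -/
theorem sum_powersetCard_sum_sq {α : Type*} [DecidableEq α] (T : Finset α) (s : ℕ) (c : α → ℝ) :
    (#T : ℝ) * (#T - 1) * ∑ S ∈ T.powersetCard s, (∑ i ∈ S, c i) ^ 2
      = s * (#T).choose s
        * ((#T - s) * ∑ i ∈ T, c i ^ 2 + (s - 1) * (∑ i ∈ T, c i) ^ 2) := by
  have h : ∑ S ∈ T.powersetCard s, (∑ i ∈ S, c i) ^ 2
      = ∑ i ∈ T, ∑ j ∈ T, #{S ∈ T.powersetCard s | i ∈ S ∧ j ∈ S} * (c i * c j) := by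
    have h1 : ∀ S ∈ T.powersetCard s, (∑ i ∈ S, c i) ^ 2
        = ∑ i ∈ T, ∑ j ∈ T, if i ∈ S ∧ j ∈ S then c i * c j else 0 := by
      intro S hS
      have hST := (mem_powersetCard.1 hS).1
      rw [← inter_eq_right.2 hST, ← sum_ite_mem, sq, sum_mul_sum]
      refine sum_congr rfl fun i hi => sum_congr rfl fun j hj => ?_
      simp only [mem_inter, hi, hj, true_and]
      split_ifs <;> simp_all
    rw [sum_congr rfl h1, sum_comm]
    refine sum_congr rfl fun i _ => ?_
    rw [sum_comm]
    refine sum_congr rfl fun j _ => ?_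
    rw [← sum_filter, sum_const, nsmul_eq_mul]
  -- Diagonal and off-diagonal pairs have different counts; `m (m - 1)` times the diagonal count is
  -- `s (m - 1) C(m, s) = (s (s - 1) + s (m - s)) C(m, s)`.
  have h2 : ∀ i ∈ T, ∀ j ∈ T,
      (#T : ℝ) * (#T - 1) * (#{S ∈ T.powersetCard s | i ∈ S ∧ j ∈ S} * (c i * c j))
        = s * (#T).choose s * ((s - 1) * (c i * c j)
          + if i = j then (#T - s) * c i ^ 2 else 0) := by
    intro i hi j hj
    by_cases hij : i = j
    · subst hij
      have := card_mul_card_filter_mem T s hi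
      simp only [and_self, if_true]
      linear_combination ((#T : ℝ) - 1) * c i ^ 2 * this
    · have := card_mul_card_filter_pair T s hi hj hij
      simp only [hij, if_false]
      linear_combination c i * c j * this
  rw [h, mul_sum]
  simp_rw [mul_sum]
  rw [sum_congr rfl fun i hi => sum_congr rfl fun j hj => h2 i hi j hj]
  simp_rw [← mul_sum]
  congr 1
  simp only [sum_add_distrib, sum_ite_eq, ← mul_sum]
  rw [sum_congr rfl fun i hi => if_pos hi, ← mul_sum, sq (∑ i ∈ T, c i), sum_mul]
  ring

/-- `V̂(c)` as the mean of the squares minus the square of the mean. -/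
theorem empVar_eq {n : ℕ} (hn : n ≠ 0) (c : Fin n → ℝ) :
    empVar c = (∑ i, c i ^ 2) / n - ((∑ i, c i) / n) ^ 2 := by
  have hn' : (n : ℝ) ≠ 0 := by exact_mod_cast hn
  unfold empVar empMean
  simp only [sub_sq, sum_add_distrib, sum_sub_distrib, sum_const, card_univ, Fintype.card_fin,
    nsmul_eq_mul, ← sum_mul, ← mul_sum]
  field_simp
  ring

theorem randomSum_eq {n : ℕ} (a b : Fin n → ℝ) (S : Finset (Fin n)) :
    randomSum a b S = ∑ i, a i - ∑ i ∈ S, (a i - b i) := by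
  have h : ∑ i ∈ S, (a i - b i) = ∑ i, if i ∈ S then a i - b i else 0 := by
    rw [sum_ite_mem, univ_inter]
  rw [h, ← sum_sub_distrib]
  refine sum_congr rfl fun i _ => ?_
  by_cases hi : i ∈ S <;> simp [hi]

/-- **Lemma (Conditional variance of the random sum).** -/
theorem cond_var_random_sum (n : ℕ) (hn : 3 ≤ n) (a b : Fin n → ℝ) (ℓ : Fin n)
    (s : ℕ) (hs1 : 1 ≤ s) (hs : s ≤ n - 1) :
    unifSubsetCondVar n s (randomSum a b) ℓ
      = ((n : ℝ) * s * ((n : ℝ) - s - 1) / (((n : ℝ) - 1) * ((n : ℝ) - 2)))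
        * (empVar (fun i => a i - b i)
            - (1 / ((n : ℝ) - 1))
              * (a ℓ - b ℓ - (empMean a - empMean b)) ^ 2) := by
  have hfilter : ((univ : Finset (Fin n)).powersetCard s).filter (fun S => ℓ ∉ S)
      = (univ.erase ℓ).powersetCard s := by
    ext S
    simp [mem_powersetCard, subset_erase, and_comm]
  have hcard : #((univ : Finset (Fin n)).erase ℓ) = n - 1 := by simp
  have hcardR : ((n - 1 : ℕ) : ℝ) = n - 1 := by
    rw [Nat.cast_sub (by omega)]; simp
  have hn3 : (3 : ℝ) ≤ n := by exact_mod_cast hn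
  have hn0 : (n : ℝ) ≠ 0 := by linarith
  have hn1 : (n : ℝ) - 1 ≠ 0 := by linarith
  have hn2 : (n : ℝ) - 2 ≠ 0 := by linarith
  have hC : ((n - 1).choose s : ℝ) ≠ 0 := by
    exact_mod_cast (Nat.choose_pos hs).ne'
  have hmean : empMean a - empMean b = (∑ i, (a i - b i)) / n := by
    unfold empMean
    rw [sum_sub_distrib, sub_div]
  rw [hmean, empVar_eq (by omega)]
  have m1 := sum_powersetCard_sum ((univ : Finset (Fin n)).erase ℓ) s (fun i => a i - b i)
  have m2 := sum_powersetCard_sum_sq ((univ : Finset (Fin n)).erase ℓ) s (fun i => a i - b i)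
  rw [sum_erase_eq_sub (mem_univ ℓ), hcard, hcardR] at m1
  rw [sum_erase_eq_sub (mem_univ ℓ), sum_erase_eq_sub (mem_univ ℓ), hcard, hcardR] at m2
  unfold unifSubsetCondVar unifSubsetCondExp
  rw [hfilter]
  simp only [randomSum_eq, card_powersetCard, hcard, sub_sq (∑ i, a i), sum_add_distrib,
    sum_sub_distrib, sum_const, nsmul_eq_mul, ← mul_sum]
  simp only [← sum_sub_distrib]
  generalize (∑ S ∈ (univ.erase ℓ).powersetCard s, ∑ i ∈ S, (a i - b i)) = M1 at *
  generalize (∑ S ∈ (univ.erase ℓ).powersetCard s, (∑ i ∈ S, (a i - b i)) ^ 2) = M2 at *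
  generalize ∑ i, (a i - b i) = A at *
  generalize ∑ i, (a i - b i) ^ 2 = Q at *
  generalize a ℓ - b ℓ = x at *
  generalize ∑ i, a i = K at *
  generalize ((n - 1).choose s : ℝ) = C at *
  rw [mul_comm, ← eq_div_iff hn1] at m1
  rw [mul_comm, ← eq_div_iff (mul_ne_zero hn1 (by convert hn2 using 1; ring))] at m2
  have e : (n : ℝ) - 1 - 1 = n - 2 := by ring
  rw [e] at m2
  rw [m1, m2]
  field_simp
  ring
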